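/- arXiv:2403.02851 — 2 statements merged into one kernel-verified Lean document; each statement's English description precedes it below -/
import Mathlib

section
/- Let a ∈ ℍ with Im a ≠ 0 and let c ∈ ℝ, c ≠ 0. Set c₀ = |c|/|Im a|. Then the quaternionic Mahler measure of the commutator polynomial L(q) = aq − qa + c is m_ℍ(L) = log|Im a| + (1/8)·((4 + c₀²)·log(4 + c₀²) − 2c₀²·log c₀ − 4). -/
open MeasureTheory Quaternion

noncomputable instance : MeasurableSpace (Quaternion ℝ) := borel _
instance : BorelSpace (Quaternion ℝ) := ⟨rfl⟩
instance : Nonempty (Metric.sphere (0 : Quaternion ℝ) 1) := ⟨⟨1, by simp⟩⟩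

/-- The probability Haar measure `μ` on the group `T¹(ℍ)` of unit quaternions
(the Haar measure normalized so that the whole group has measure `1`). -/
noncomputable def muH : Measure (Metric.sphere (0 : Quaternion ℝ) 1) :=
  Measure.haarMeasure ⊤

/-- The quaternionic Mahler measure `m_ℍ(f) = ∫_{T¹(ℍ)} log |f(q)| dμ(q)`. -/
noncomputable def mahlerH (f : Quaternion ℝ → Quaternion ℝ) : ℝ :=
  ∫ q : Metric.sphere (0 : Quaternion ℝ) 1, Real.log ‖f q‖ ∂muH

/-!
Commuting with `a` kills the component of `q` in the plane spanned by `1` and `a`. The orthogonal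
component is purely imaginary and anticommutes with `Im a`, so the commutator has length
`2 |Im a|` times that of the component, and it is orthogonal to the real number `c`. Hence
`|L(q)|² = 4 |Im a|² t + c²`, where `t` is the squared length of the projection of `q` to a plane.

As in Archimedes' hat-box theorem, `t` is uniform on `[0, 1]`. Indeed, the squared distance to the
origin pushes planar area to a multiple of length, so the squared lengths `(u, v)` of the
projections of a random point of the unit ball of `ℍ` to two orthogonal planes are uniform on the
triangle `u + v < 1`, and `t` corresponds to `u / (u + v)`. The measure is therefore
`½ ∫₀¹ log (4 |Im a|² t + c²) dt`.
-/

open Set Real Module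
open scoped ENNReal Pointwise InnerProductSpace

section SphereMeasure

variable {E : Type*} [NormedAddCommGroup E] [NormedSpace ℝ E] [MeasurableSpace E] [BorelSpace E]
  {μ : Measure E}

theorem map_toSphere_of_smul_invariant [NullSingletonClass μ] {β : Type*} [MeasurableSpace β]
    {f : E → β} (hf : Measurable f) (hsmul : ∀ (r : ℝ) (x : E), 0 < r → f (r • x) = f x) :
    μ.toSphere.map (fun q => f q.1) =
      (finrank ℝ E : ℝ≥0∞) • (μ.restrict (Metric.ball 0 1)).map f := by
  ext A hA
  have hcone : Ioo (0 : ℝ) 1 • ((↑) '' {q : Metric.sphere (0 : E) 1 | f q ∈ A}) =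
      (f ⁻¹' A ∩ Metric.ball 0 1) \ {0} := by
    ext x
    simp only [mem_smul, mem_image, mem_sdiff, mem_inter_iff, mem_preimage, mem_ball_zero_iff,
      mem_singleton_iff]
    constructor
    · rintro ⟨r, ⟨hr0, hr1⟩, _, ⟨q, hq, rfl⟩, rfl⟩
      have hq1 : ‖(q : E)‖ = 1 := norm_eq_of_mem_sphere q
      refine ⟨⟨by rwa [hsmul r q hr0], ?_⟩, smul_ne_zero hr0.ne' (ne_zero_of_mem_unit_sphere q)⟩
      rwa [norm_smul, hq1, mul_one, norm_of_nonneg hr0.le]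
    · rintro ⟨⟨hxA, hx1⟩, hx0⟩
      have hx : 0 < ‖x‖ := norm_pos_iff.2 hx0
      refine ⟨‖x‖, ⟨hx, hx1⟩, ‖x‖⁻¹ • x, ⟨⟨‖x‖⁻¹ • x, ?_⟩, ?_, rfl⟩, smul_inv_smul₀ hx.ne' x⟩
      · simp [norm_smul, hx.ne']
      · simpa [hsmul _ x (inv_pos.2 hx)] using hxA
  rw [Measure.map_apply (by fun_prop) hA, Measure.toSphere_apply' _ (hA.preimage (by fun_prop)),
    Measure.smul_apply, Measure.map_apply hf hA, Measure.restrict_apply (hf hA), smul_eq_mul]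
  exact congrArg _ ((congrArg μ hcone).trans (measure_sdiff_null (measure_singleton _)))

variable {F : Type*} [NormedAddCommGroup F] [NormedSpace ℝ F] [MeasurableSpace F] [BorelSpace F]
  {ν : Measure F}

theorem measurePreserving_toSphere {e : E ≃ₗᵢ[ℝ] F} (he : MeasurePreserving e μ ν)
    {φ : Metric.sphere (0 : E) 1 → Metric.sphere (0 : F) 1} (hφ : ∀ q, (φ q : F) = e q) :
    MeasurePreserving φ μ.toSphere ν.toSphere := by
  have hφm : Measurable φ := by
    have : Measurable fun q => (φ q : F) := by simp only [hφ]; fun_prop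
    exact this.subtype_mk (h := fun q => (φ q).2)
  refine ⟨hφm, Measure.ext fun S hS => ?_⟩
  have hcone : Ioo (0 : ℝ) 1 • ((↑) '' (φ ⁻¹' S)) = e ⁻¹' (Ioo (0 : ℝ) 1 • ((↑) '' S)) := by
    ext x
    simp only [mem_smul, mem_image, mem_preimage]
    constructor
    · rintro ⟨r, hr, _, ⟨q, hq, rfl⟩, rfl⟩
      exact ⟨r, hr, φ q, ⟨φ q, hq, rfl⟩, by rw [hφ, map_smul]⟩
    · rintro ⟨r, hr, _, ⟨p, hp, rfl⟩, hx⟩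
      let q : Metric.sphere (0 : E) 1 := ⟨e.symm p, by simp⟩
      have hq : φ q = p := Subtype.ext (by simp [hφ, q])
      refine ⟨r, hr, q, ⟨q, by rwa [hq], rfl⟩, e.injective ?_⟩
      rw [map_smul, ← hφ, hq, hx]
  rw [Measure.map_apply hφm hS, Measure.toSphere_apply' _ (hφm hS), Measure.toSphere_apply' _ hS,
    hcone, e.toLinearEquiv.finrank_eq]
  congr 1
  exact he.measure_preimage_emb e.toHomeomorph.measurableEmbedding _

end SphereMeasure

section UniformDistribution

theorem map_norm_sq_volume {E : Type*} [NormedAddCommGroup E] [InnerProductSpace ℝ E]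
    [FiniteDimensional ℝ E] [MeasurableSpace E] [BorelSpace E] (hE : finrank ℝ E = 2) :
    (volume : Measure E).map (fun x => ‖x‖ ^ 2) =
      ENNReal.ofReal π • volume.restrict (Ioi (0 : ℝ)) := by
  have : Nontrivial E := nontrivial_of_finrank_pos (R := ℝ) (by lia)
  have hball (r : ℝ) : volume (Metric.ball (0 : E) √r) = ENNReal.ofReal π * ENNReal.ofReal r := by
    rw [InnerProductSpace.volume_ball_of_dim_even (k := 1) hE, hE, mul_comm,
      ← ENNReal.ofReal_pow (sqrt_nonneg r)]
    rcases le_total 0 r with hr | hr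
    · simp [sq_sqrt hr]
    · simp [sqrt_eq_zero_of_nonpos hr, ENNReal.ofReal_of_nonpos hr]
  have hIco (s t : ℝ) (hst : s < t) : (volume : Measure E).map (fun x => ‖x‖ ^ 2) (Ico s t) =
      ENNReal.ofReal π * (ENNReal.ofReal t - ENNReal.ofReal s) := by
    have hannulus : (fun x : E => ‖x‖ ^ 2) ⁻¹' Ico s t =
        Metric.ball 0 √t \ Metric.ball 0 √s := by
      ext x
      simp [lt_sqrt (norm_nonneg x), and_comm]
    rw [Measure.map_apply (by fun_prop) measurableSet_Ico, hannulus,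
      measure_sdiff (Metric.ball_subset_ball (sqrt_le_sqrt hst.le)) (by measurability)
        measure_ball_lt_top.ne, hball, hball, ENNReal.mul_sub (by simp)]
  refine Measure.ext_of_Ico' _ _ (fun s t hst => ?_) fun s t hst => ?_
  · rw [hIco s t hst]
    finiteness
  · have hpos : (Ico s t ∩ Ioi 0 : Set ℝ) =ᵐ[volume] Ico (max s 0) t := by
      rw [← Ico_inter_Ici]
      exact (Filter.EventuallyEq.refl _ _).inter Ioi_ae_eq_Ici
    rw [hIco s t hst, Measure.smul_apply, Measure.restrict_apply measurableSet_Ico,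
      measure_congr hpos, Real.volume_Ico, smul_eq_mul, ENNReal.ofReal_sub _ (le_max_right s 0)]
    simp [ENNReal.ofReal_max]

theorem volume_setOf_mem_Ioo_and_div_mem {B : Set ℝ} (hB : MeasurableSet B) :
    volume {p : ℝ × ℝ | p.2 ∈ Ioo 0 1 ∧ p.1 / p.2 ∈ B} = 2⁻¹ * volume B := by
  have hm : MeasurableSet {p : ℝ × ℝ | p.2 ∈ Ioo 0 1 ∧ p.1 / p.2 ∈ B} := by measurability
  have hslice (r : ℝ) : volume ((·, r) ⁻¹' {p : ℝ × ℝ | p.2 ∈ Ioo 0 1 ∧ p.1 / p.2 ∈ B}) =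
      (Ioo 0 1).indicator (fun r => ENNReal.ofReal r * volume B) r := by
    by_cases hr : r ∈ Ioo (0 : ℝ) 1
    · have hscale := Real.volume_preimage_mul_right (inv_ne_zero hr.1.ne') B
      rw [inv_inv, abs_of_pos hr.1] at hscale
      simpa [mem_Ioo.1 hr, div_eq_mul_inv, preimage] using hscale
    · have hr' : ¬(0 < r ∧ r < 1) := hr
      simp [hr']
  have hlength : ∫⁻ r in Ioo (0 : ℝ) 1, ENNReal.ofReal r = 2⁻¹ := by
    have hint : IntegrableOn (fun r : ℝ => r) (Ioo 0 1) :=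
      continuous_id.integrableOn_Icc.mono_set Ioo_subset_Icc_self
    have hpos : ∀ᵐ r : ℝ ∂volume.restrict (Ioo 0 1), 0 ≤ r :=
      (ae_restrict_mem measurableSet_Ioo).mono fun r hr => hr.1.le
    rw [← ofReal_integral_eq_lintegral_ofReal hint hpos, ← integral_Ioc_eq_integral_Ioo,
      ← intervalIntegral.integral_of_le zero_le_one]
    simp
  rw [Measure.volume_eq_prod, Measure.prod_apply_symm hm]
  simp only [hslice]
  rw [lintegral_indicator measurableSet_Ioo, lintegral_mul_const _ (by fun_prop), hlength]

theorem map_div_add_volume_restrict_triangle :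
    (volume.restrict {p : ℝ × ℝ | (0 < p.1 ∧ 0 < p.2) ∧ p.1 + p.2 < 1}).map
        (fun p => p.1 / (p.1 + p.2)) =
      (2⁻¹ : ℝ≥0∞) • volume.restrict (Ioo 0 1) := by
  have hf : Measurable fun p : ℝ × ℝ => p.1 / (p.1 + p.2) := by fun_prop
  ext A hA
  have hshear : (fun p : ℝ × ℝ => p.1 / (p.1 + p.2)) ⁻¹' A ∩
      {p : ℝ × ℝ | (0 < p.1 ∧ 0 < p.2) ∧ p.1 + p.2 < 1} =
      (fun p : ℝ × ℝ => (p.1, p.1 + p.2)) ⁻¹'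
        {p | p.2 ∈ Ioo 0 1 ∧ p.1 / p.2 ∈ A ∩ Ioo 0 1} := by
    ext ⟨s, t⟩
    simp only [mem_inter_iff, mem_preimage, mem_ofPred_eq, mem_Ioo]
    constructor
    · rintro ⟨hmem, ⟨hs, ht⟩, hlt⟩
      have hpos : 0 < s + t := by positivity
      exact ⟨⟨hpos, hlt⟩, hmem, by positivity, (div_lt_one hpos).2 (by linarith)⟩
    · rintro ⟨⟨hpos, hlt⟩, hmem, h0, h1⟩
      have hs : 0 < s := (div_pos_iff_of_pos_right hpos).1 h0
      exact ⟨hmem, ⟨hs, by linarith [(div_lt_one hpos).1 h1]⟩, hlt⟩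
  have hm : MeasurableSet {p : ℝ × ℝ | p.2 ∈ Ioo 0 1 ∧ p.1 / p.2 ∈ A ∩ Ioo 0 1} := by
    measurability
  rw [Measure.map_apply hf hA, Measure.restrict_apply (hf hA), hshear, Measure.volume_eq_prod,
    (measurePreserving_prod_add volume volume).measure_preimage hm.nullMeasurableSet,
    ← Measure.volume_eq_prod, volume_setOf_mem_Ioo_and_div_mem (hA.inter measurableSet_Ioo),
    Measure.smul_apply, Measure.restrict_apply hA, smul_eq_mul]

variable {E : Type*} [NormedAddCommGroup E] [InnerProductSpace ℝ E] [FiniteDimensional ℝ E]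
  [MeasurableSpace E] [BorelSpace E] {K : Submodule ℝ E}

theorem map_prodMk_norm_sq_starProjection_volume (hK : finrank ℝ K = 2) (hK' : finrank ℝ Kᗮ = 2) :
    (volume : Measure E).map (fun x => (‖K.starProjection x‖ ^ 2, ‖Kᗮ.starProjection x‖ ^ 2)) =
      ENNReal.ofReal (π ^ 2) • volume.restrict {p : ℝ × ℝ | 0 < p.1 ∧ 0 < p.2} := by
  have hdecomp : MeasurePreserving (WithLp.ofLp ∘ K.orthogonalDecomposition)
      (volume : Measure E) ((volume : Measure K).prod (volume : Measure Kᗮ)) :=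
    (WithLp.volume_preserving_ofLp K Kᗮ).comp K.orthogonalDecomposition.measurePreserving
  have hcomp : (fun x => (‖K.starProjection x‖ ^ 2, ‖Kᗮ.starProjection x‖ ^ 2)) =
      Prod.map (fun y : K => ‖y‖ ^ 2) (fun z : Kᗮ => ‖z‖ ^ 2) ∘
        WithLp.ofLp ∘ K.orthogonalDecomposition := by
    ext x <;> simp
  rw [hcomp, ← Measure.map_map (by fun_prop) hdecomp.measurable, hdecomp.map_eq,
    ← Measure.map_prod_map _ _ (by fun_prop) (by fun_prop), map_norm_sq_volume hK,
    map_norm_sq_volume hK', Measure.prod_smul_left, Measure.prod_smul_right, smul_smul, ← sq,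
    ← ENNReal.ofReal_pow pi_pos.le, Measure.prod_restrict]
  rfl

theorem map_norm_sq_starProjection_toSphere (hE : finrank ℝ E = 4) (hK : finrank ℝ K = 2) :
    (volume : Measure E).toSphere.map (fun q => ‖K.starProjection q.1‖ ^ 2) =
      ENNReal.ofReal (2 * π ^ 2) • volume.restrict (Ioo (0 : ℝ) 1) := by
  have hK' : finrank ℝ Kᗮ = 2 := by have := K.finrank_add_finrank_orthogonal; lia
  have : Nontrivial E := nontrivial_of_finrank_pos (R := ℝ) (by lia)
  let Φ (x : E) : ℝ × ℝ := (‖K.starProjection x‖ ^ 2, ‖Kᗮ.starProjection x‖ ^ 2)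
  let g (p : ℝ × ℝ) : ℝ := p.1 / (p.1 + p.2)
  have hΦ : Measurable Φ := by fun_prop
  have hg : Measurable g := by fun_prop
  have hΦsum (x : E) : (Φ x).1 + (Φ x).2 = ‖x‖ ^ 2 :=
    (K.norm_sq_eq_add_norm_sq_starProjection x).symm
  have hsphere (q : Metric.sphere (0 : E) 1) : ‖K.starProjection q.1‖ ^ 2 = (g ∘ Φ) q := by
    change _ = (Φ q).1 / ((Φ q).1 + (Φ q).2)
    rw [hΦsum, norm_eq_of_mem_sphere, one_pow, div_one]
  have hsmul (r : ℝ) (x : E) (hr : 0 < r) : (g ∘ Φ) (r • x) = (g ∘ Φ) x := by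
    change (Φ (r • x)).1 / ((Φ (r • x)).1 + (Φ (r • x)).2) = (Φ x).1 / ((Φ x).1 + (Φ x).2)
    rw [hΦsum, hΦsum, norm_smul, mul_pow]
    simp only [Φ, map_smul, norm_smul, mul_pow]
    exact mul_div_mul_left _ _ (pow_ne_zero 2 (norm_ne_zero_iff.2 hr.ne'))
  have hball : Metric.ball (0 : E) 1 = Φ ⁻¹' {p | p.1 + p.2 < 1} := by
    ext x
    simp [hΦsum]
  have htriangle : {p : ℝ × ℝ | 0 < p.1 ∧ 0 < p.2} ∩ {p | p.1 + p.2 < 1} =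
      {p | (0 < p.1 ∧ 0 < p.2) ∧ p.1 + p.2 < 1} := rfl
  have hhalf : MeasurableSet {p : ℝ × ℝ | p.1 + p.2 < 1} := by measurability
  simp only [hsphere]
  rw [map_toSphere_of_smul_invariant (hg.comp hΦ) hsmul, hball, ← Measure.map_map hg hΦ,
    ← Measure.restrict_map hΦ hhalf, map_prodMk_norm_sq_starProjection_volume hK hK',
    Measure.restrict_smul, Measure.restrict_restrict hhalf, inter_comm, htriangle,
    Measure.map_smul, map_div_add_volume_restrict_triangle, smul_smul, smul_smul, hE]
  have htwo : ((4 : ℕ) : ℝ≥0∞) * 2⁻¹ = 2 := by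
    rw [← div_eq_mul_inv, eq_comm, ENNReal.eq_div_iff two_ne_zero ENNReal.ofNat_ne_top]
    norm_num
  rw [mul_right_comm, htwo, ENNReal.ofReal_mul zero_le_two, ENNReal.ofReal_ofNat]

end UniformDistribution

section UnitQuaternions

instance : (volume : Measure ℍ[ℝ]).toSphere.IsMulLeftInvariant where
  map_mul_left_eq_self p := by
    let e : ℍ[ℝ] →ₗᵢ[ℝ] ℍ[ℝ] :=
      ⟨LinearMap.mulLeft ℝ (p : ℍ[ℝ]), fun x => by simp⟩
    exact (measurePreserving_toSphere (e.toLinearIsometryEquiv rfl).measurePreserving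
      fun _ => rfl).map_eq

theorem toSphere_volume_eq_smul_muH :
    (volume : Measure ℍ[ℝ]).toSphere = ENNReal.ofReal (2 * π ^ 2) • muH := by
  have harea : (volume : Measure ℍ[ℝ]).toSphere univ = ENNReal.ofReal (2 * π ^ 2) := by
    rw [Measure.toSphere_apply_univ,
      InnerProductSpace.volume_ball_of_dim_even (k := 2) Quaternion.finrank_eq_four,
      Quaternion.finrank_eq_four, ← ENNReal.ofReal_natCast, ← ENNReal.ofReal_pow zero_le_one,
      ← ENNReal.ofReal_mul (by positivity), ← ENNReal.ofReal_mul (by positivity)]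
    congr 1
    norm_num
    ring
  have huniq := Measure.haarMeasure_unique (volume : Measure ℍ[ℝ]).toSphere ⊤
  rwa [TopologicalSpace.PositiveCompacts.coe_top, harea] at huniq

theorem map_norm_sq_starProjection_muH {K : Submodule ℝ ℍ[ℝ]} (hK : finrank ℝ K = 2) :
    muH.map (fun q => ‖K.starProjection q.1‖ ^ 2) = volume.restrict (Ioo (0 : ℝ) 1) := by
  have h := map_norm_sq_starProjection_toSphere Quaternion.finrank_eq_four hK
  rw [toSphere_volume_eq_smul_muH, Measure.map_smul] at h
  have h0 : ENNReal.ofReal (2 * π ^ 2) ≠ 0 := (ENNReal.ofReal_pos.2 (by positivity)).ne'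
  exact Measure.ext fun S _ =>
    (ENNReal.mul_right_inj h0 ENNReal.ofReal_ne_top).1 (DFunLike.congr_fun h S)

end UnitQuaternions

section Commutator

theorem norm_sq_commutator_add_coe (a q : ℍ[ℝ]) (c : ℝ) :
    ‖a * q - q * a + c‖ ^ 2 = ‖a * q - q * a‖ ^ 2 + c ^ 2 := by
  have horth : ⟪a * q - q * a, (c : ℍ[ℝ])⟫_ℝ = 0 := by
    simp only [Quaternion.inner_def, Quaternion.star_coe, Quaternion.re_mul, Quaternion.re_sub,
      Quaternion.imI_coe, Quaternion.imJ_coe, Quaternion.imK_coe]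
    ring
  rw [norm_add_sq_real, horth, Quaternion.norm_coe, norm_eq_abs, sq_abs, mul_zero, add_zero]

theorem commutator_eq_two_smul_im_mul {a q : ℍ[ℝ]} (hq : q.re = 0) (haq : ⟪a, q⟫_ℝ = 0) :
    a * q - q * a = (2 : ℝ) • (a.im * q) := by
  have hdot : a.imI * q.imI + a.imJ * q.imJ + a.imK * q.imK = 0 := by
    simpa [Quaternion.inner_def, hq] using haq
  ext <;> simp [hq] <;> linarith

theorem norm_commutator_eq (a q : ℍ[ℝ]) :
    ‖a * q - q * a‖ = 2 * ‖a.im‖ * ‖(Submodule.span ℝ {1, a})ᗮ.starProjection q‖ := by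
  set K := Submodule.span ℝ {1, a}
  obtain ⟨x, y, hk⟩ := Submodule.mem_span_pair.1 (K.starProjection_apply_mem q)
  have hcomm : Commute a (K.starProjection q) := by
    rw [← hk]
    exact ((Commute.one_right a).smul_right x).add_right ((Commute.refl a).smul_right y)
  have hq' : Kᗮ.starProjection q ∈ Kᗮ := Kᗮ.starProjection_apply_mem q
  have hre : (Kᗮ.starProjection q).re = 0 := by
    simpa [Quaternion.inner_def] using hq' 1 (Submodule.subset_span (by simp))
  have horth : ⟪a, Kᗮ.starProjection q⟫_ℝ = 0 := hq' a (Submodule.subset_span (by simp))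
  have hsplit : a * q - q * a = a * Kᗮ.starProjection q - Kᗮ.starProjection q * a := by
    conv_lhs => rw [← K.starProjection_add_starProjection_orthogonal q]
    rw [mul_add, add_mul, hcomm.eq, add_sub_add_left_eq_sub]
  rw [hsplit, commutator_eq_two_smul_im_mul hre horth, norm_smul, norm_mul, norm_two, mul_assoc]

theorem finrank_span_one_self {a : ℍ[ℝ]} (ha : a.im ≠ 0) :
    finrank ℝ (Submodule.span ℝ {1, a}) = 2 := by
  have hpair : LinearIndependent ℝ ![1, a] := by
    refine LinearIndependent.pair_iff.2 fun s t h => ?_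
    have him : t • a.im = 0 := by simpa using congrArg Quaternion.im h
    have ht : t = 0 := (smul_eq_zero.1 him).resolve_right ha
    exact ⟨by simpa [ht] using h, ht⟩
  rw [← Matrix.range_cons_cons_empty 1 a ![], finrank_span_eq_card hpair, Fintype.card_fin]

theorem mahlerH_commutator_add_coe_eq_integral {a : ℍ[ℝ]} (ha : a.im ≠ 0) (c : ℝ) :
    mahlerH (fun q => a * q - q * a + c) =
      (∫ t in (0 : ℝ)..1, Real.log (4 * ‖a.im‖ ^ 2 * t + c ^ 2)) / 2 := by
  set K := Submodule.span ℝ {1, a}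
  have hK : finrank ℝ Kᗮ = 2 := by
    have := K.finrank_add_finrank_orthogonal
    rw [finrank_span_one_self ha, Quaternion.finrank_eq_four] at this
    lia
  have hlog (q : ℍ[ℝ]) : Real.log ‖a * q - q * a + c‖ =
      Real.log (4 * ‖a.im‖ ^ 2 * ‖Kᗮ.starProjection q‖ ^ 2 + c ^ 2) / 2 := by
    have hnorm : ‖a * q - q * a‖ = 2 * ‖a.im‖ * ‖Kᗮ.starProjection q‖ := norm_commutator_eq a q
    rw [eq_div_iff two_ne_zero, mul_comm, ← Nat.cast_ofNat, ← Real.log_pow,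
      norm_sq_commutator_add_coe, hnorm]
    ring_nf
  rw [mahlerH, intervalIntegral.integral_of_le zero_le_one, integral_Ioc_eq_integral_Ioo,
    ← map_norm_sq_starProjection_muH hK, integral_map (by fun_prop)
      (Measurable.aestronglyMeasurable (by fun_prop)), ← integral_div]
  simp only [hlog]

end Commutator

theorem integral_log_mul_add {b : ℝ} (hb : b ≠ 0) (d : ℝ) :
    ∫ t in (0 : ℝ)..1, Real.log (b * t + d) =
      ((b + d) * Real.log (b + d) - d * Real.log d) / b - 1 := by
  rw [intervalIntegral.integral_comp_mul_add (f := Real.log) hb, integral_log]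
  simp only [mul_one, mul_zero, zero_add, smul_eq_mul]
  field_simp
  ring

/-- Mahler measure of the commutator polynomial `ax - xa + c`. -/
theorem mahlerH_commutator_add_const (a : Quaternion ℝ) (ha : a.im ≠ 0)
    (c : ℝ) (hc : c ≠ 0) (c0 : ℝ) (hc0 : c0 = |c| / ‖a.im‖) :
    mahlerH (fun q => a * q - q * a + (c : Quaternion ℝ)) =
      Real.log ‖a.im‖ +
        (1 / 8) * ((4 + c0 ^ 2) * Real.log (4 + c0 ^ 2) - 2 * c0 ^ 2 * Real.log c0 - 4) := by
  have hA : 0 < ‖a.im‖ := norm_pos_iff.2 ha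
  have hc0pos : 0 < c0 := hc0 ▸ div_pos (abs_pos.2 hc) hA
  have hcsq : c ^ 2 = ‖a.im‖ ^ 2 * c0 ^ 2 := by
    rw [hc0, div_pow, sq_abs, mul_div_cancel₀ _ (by positivity)]
  have hlog : Real.log (c ^ 2) = 2 * Real.log ‖a.im‖ + 2 * Real.log c0 := by
    rw [hcsq, Real.log_mul (by positivity) (by positivity), Real.log_pow, Real.log_pow,
      Nat.cast_ofNat]
  have hsum : 4 * ‖a.im‖ ^ 2 + c ^ 2 = ‖a.im‖ ^ 2 * (4 + c0 ^ 2) := by rw [hcsq]; ring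
  have hlogsum : Real.log (4 * ‖a.im‖ ^ 2 + c ^ 2) =
      2 * Real.log ‖a.im‖ + Real.log (4 + c0 ^ 2) := by
    rw [hsum, Real.log_mul (by positivity) (by positivity), Real.log_pow, Nat.cast_ofNat]
  rw [mahlerH_commutator_add_coe_eq_integral ha, integral_log_mul_add (by positivity), hlog,
    hlogsum, hsum, hcsq]
  field_simp
  ring
end

section
/- Let a, b, c ∈ ℍ, not all zero, and suppose |a|, |b|, |c| do not form a triangle, i.e. max{|a|,|b|,|c|} is at least the sum of the other two. Set M = max{|a|,|b|,|c|}. Then the two-variable quaternionic Mahler measure satisfies m_ℍ(ax + by + c) = log M + (|a|² + |b|² + |c|²)/(4M²) − 1/4. -/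
open MeasureTheory Quaternion

/-- The two-variable quaternionic Mahler measure
`m_ℍ(f) = ∫_{T¹(ℍ)×T¹(ℍ)} log |f(x,y)| d(μ⊗μ)(x,y)`. -/
noncomputable def mahlerH2 (f : Quaternion ℝ → Quaternion ℝ → Quaternion ℝ) : ℝ :=
  ∫ p : (Metric.sphere (0 : Quaternion ℝ) 1) × (Metric.sphere (0 : Quaternion ℝ) 1),
    Real.log ‖f p.1 p.2‖ ∂(muH.prod muH)

/-
If `v` is a pure quaternion, left translation by `exp (θ • v)` preserves the Haar measure, so the
integral of a derivative along this flow vanishes. Summing over `v = i, j, k` yields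
`∫ ((1 - t²) P'(t) - 3 t P(t)) = 0` with `t = Re x`, for every polynomial `P`; taking `P = Uₙ'`, the
differential equation of the Chebyshev polynomials of the second kind gives `∫ Uₙ (Re x) = 0` for
`n ≥ 1`, and `∫ Tₙ (Re x)` follows. Expanding `log (1 - 2 r t + r²)` and the Poisson kernel in the
`Tₙ` gives the averages of `log ‖p + q x‖` and `‖p + q x‖⁻²` over the unit sphere. The case
`‖p‖ = ‖q‖` of the first average is the limit `r → 1`.

When `‖a‖, ‖b‖, ‖c‖` do not form a triangle, one may assume after exchanging `x` and `y` that
`‖b‖ ≤ |‖c‖ - ‖a‖|`. Then `‖b‖ ≤ ‖c + a x‖` for every `x`, so the integral over `y` equals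
`log ‖c + a x‖ + ‖b‖² / (4 ‖c + a x‖²)`, and the two averages give the integral over `x`.
-/

section General

variable {α β : Type*} [MeasurableSpace α] [MeasurableSpace β]

theorem integral_eq_zero_of_hasDerivAt_mul_left {G E : Type*} [Group G] [MeasurableSpace G]
    [MeasurableMul G] [NormedAddCommGroup E] [NormedSpace ℝ E] {μ : Measure G} [IsFiniteMeasure μ]
    [μ.IsMulLeftInvariant] {γ : ℝ → G} {f f' : G → E} {C : ℝ} (hf : Integrable f μ)
    (hf' : AEStronglyMeasurable f' μ) (hC : ∀ x, ‖f' x‖ ≤ C)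
    (hderiv : ∀ θ x, HasDerivAt (fun θ ↦ f (γ θ * x)) (f' (γ θ * x)) θ) :
    ∫ x, f' x ∂μ = 0 := by
  have hF (θ : ℝ) : Integrable (fun x ↦ f (γ θ * x)) μ := hf.comp_mul_left (γ θ)
  have h : HasDerivAt (fun θ ↦ ∫ x, f (γ θ * x) ∂μ) (∫ x, f' (γ 0 * x) ∂μ) 0 :=
    (hasDerivAt_integral_of_dominated_loc_of_deriv_le (F' := fun θ x ↦ f' (γ θ * x))
      Filter.univ_mem (.of_forall fun θ ↦ (hF θ).aestronglyMeasurable) (hF 0)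
      (hf'.comp_measurePreserving (measurePreserving_mul_left μ (γ 0)))
      (.of_forall fun x θ _ ↦ hC (γ θ * x)) (integrable_const C)
      (.of_forall fun x θ _ ↦ hderiv θ x)).2
  simp only [integral_mul_left_eq_self] at h
  exact h.unique (hasDerivAt_const 0 _)

theorem integrable_prod_of_le {μ : Measure α} {ν : Measure β} [SFinite μ] [SFinite ν]
    {f K : α × β → ℝ} (hf : AEStronglyMeasurable f (μ.prod ν)) (hK : Integrable K (μ.prod ν))
    (hfK : ∀ p, f p ≤ K p) (hinner : ∀ᵐ x ∂μ, Integrable (fun y ↦ f (x, y)) ν)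
    (houter : Integrable (fun x ↦ ∫ y, f (x, y) ∂ν) μ) : Integrable f (μ.prod ν) := by
  suffices Integrable (fun p ↦ K p - f p) (μ.prod ν) by
    simpa [Pi.sub_def] using hK.sub this
  have hnorm (p : α × β) : ‖K p - f p‖ = K p - f p := Real.norm_of_nonneg (sub_nonneg.2 (hfK p))
  refine (integrable_prod_iff (hK.aestronglyMeasurable.sub hf)).2 ⟨?_, ?_⟩
  · filter_upwards [hinner, hK.prod_right_ae] with x hfx hKx using hKx.sub hfx
  · simp only [Pi.sub_apply, hnorm]
    refine (hK.integral_prod_left.sub houter).congr ?_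
    filter_upwards [hinner, hK.prod_right_ae] with x hfx hKx using (integral_sub hKx hfx).symm

section Limit

open Filter Topology

variable {μ : Measure α} {f : ℕ → α → ℝ} {g K C : α → ℝ} {L : ℝ}

theorem integrable_of_tendsto_of_le (hf : ∀ n, Integrable (f n) μ) (hK : Integrable K μ)
    (hfK : ∀ n x, f n x ≤ K x) (hlim : ∀ᵐ x ∂μ, Tendsto (fun n ↦ f n x) atTop (𝓝 (g x)))
    (hL : Tendsto (fun n ↦ ∫ x, f n x ∂μ) atTop (𝓝 L)) : Integrable g μ := by
  have hKf (n : ℕ) : Integrable (fun x ↦ K x - f n x) μ := hK.sub (hf n)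
  have hKf_nonneg (n : ℕ) (x : α) : 0 ≤ K x - f n x := sub_nonneg.2 (hfK n x)
  have hg : AEStronglyMeasurable g μ :=
    aestronglyMeasurable_of_tendsto_ae atTop (fun n ↦ (hf n).aestronglyMeasurable) hlim
  suffices Integrable (fun x ↦ K x - g x) μ by
    simpa [Pi.sub_def] using hK.sub this
  have hg_nonneg : 0 ≤ᵐ[μ] fun x ↦ K x - g x := by
    filter_upwards [hlim] with x hx
    exact sub_nonneg.2 (le_of_tendsto' hx fun n ↦ hfK n x)
  refine ⟨hK.aestronglyMeasurable.sub hg, (hasFiniteIntegral_iff_ofReal hg_nonneg).2 ?_⟩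
  have hint : Tendsto (fun n ↦ ∫⁻ x, ENNReal.ofReal (K x - f n x) ∂μ) atTop
      (𝓝 (ENNReal.ofReal (∫ x, K x ∂μ - L))) := by
    simp only [← ofReal_integral_eq_lintegral_ofReal (hKf _) (.of_forall (hKf_nonneg _)),
      integral_sub hK (hf _)]
    exact ENNReal.tendsto_ofReal (hL.const_sub _)
  calc ∫⁻ x, ENNReal.ofReal (K x - g x) ∂μ
      = ∫⁻ x, liminf (fun n ↦ ENNReal.ofReal (K x - f n x)) atTop ∂μ := by
        refine lintegral_congr_ae ?_
        filter_upwards [hlim] with x hx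
        exact (ENNReal.tendsto_ofReal (hx.const_sub (K x))).liminf_eq.symm
    _ ≤ liminf (fun n ↦ ∫⁻ x, ENNReal.ofReal (K x - f n x) ∂μ) atTop :=
        lintegral_liminf_le' fun n ↦ (hKf n).aemeasurable.ennreal_ofReal
    _ = ENNReal.ofReal (∫ x, K x ∂μ - L) := hint.liminf_eq
    _ < ⊤ := ENNReal.ofReal_lt_top

theorem integral_eq_of_tendsto_of_le (hf : ∀ n, Integrable (f n) μ) (hK : Integrable K μ)
    (hfK : ∀ n x, f n x ≤ K x) (hC : Integrable C μ) (hgC : ∀ n, ∀ᵐ x ∂μ, g x - C x ≤ f n x)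
    (hlim : ∀ᵐ x ∂μ, Tendsto (fun n ↦ f n x) atTop (𝓝 (g x)))
    (hL : Tendsto (fun n ↦ ∫ x, f n x ∂μ) atTop (𝓝 L)) : ∫ x, g x ∂μ = L := by
  have hg : Integrable g μ := integrable_of_tendsto_of_le hf hK hfK hlim hL
  refine tendsto_nhds_unique (tendsto_integral_of_dominated_convergence
    (fun x ↦ |g x - C x| + |K x|) (fun n ↦ (hf n).aestronglyMeasurable)
    ((hg.sub hC).abs.add hK.abs) (fun n ↦ ?_) hlim) hL
  filter_upwards [hgC n] with x hx
  rw [Real.norm_eq_abs, abs_le]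
  constructor
  · linarith [neg_abs_le (g x - C x), abs_nonneg (K x)]
  · linarith [hfK n x, le_abs_self (K x), abs_nonneg (g x - C x)]

end Limit

end General

section ChebyshevExpansion

open Polynomial Polynomial.Chebyshev

variable {r t : ℝ}

theorem one_sub_two_mul_add_sq_pos (hr : |r| < 1) (ht : |t| ≤ 1) : 0 < 1 - 2 * r * t + r ^ 2 := by
  have hrt : r * t ≤ |r| := by
    calc r * t ≤ |r| * |t| := (le_abs_self _).trans_eq (abs_mul r t)
      _ ≤ |r| := mul_le_of_le_one_right (abs_nonneg r) ht
  nlinarith [sq_abs r, pow_pos (sub_pos.2 hr) 2]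

theorem one_sub_two_mul_add_sq_le_four (hr : |r| ≤ 1) (ht : |t| ≤ 1) :
    1 - 2 * r * t + r ^ 2 ≤ 4 := by
  have hrt : -(r * t) ≤ 1 := (neg_le_abs _).trans ((abs_mul r t).trans_le
    (mul_le_one₀ hr (abs_nonneg t) ht))
  linarith [(sq_le_one_iff_abs_le_one r).2 hr]

/- With `x` a unit vector and `t = Re x`, this says `‖1 - x‖ ≤ 2 * ‖1 - r • x‖`. -/
theorem two_sub_two_mul_le (hr : r ∈ Set.Icc 0 1) (ht : |t| ≤ 1) :
    2 - 2 * t ≤ 4 * (1 - 2 * r * t + r ^ 2) := by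
  have h_add : 0 ≤ (1 + t) * (1 - r) ^ 2 :=
    mul_nonneg (by linarith [neg_le_of_abs_le ht]) (sq_nonneg _)
  have h_sub : 0 ≤ (1 - t) * (r * (2 + r)) :=
    mul_nonneg (sub_nonneg.2 (le_of_abs_le ht)) (mul_nonneg hr.1 (by linarith [hr.1]))
  linarith

theorem one_sub_two_mul_add_sq_pos_of_lt_one (hr : r ∈ Set.Icc 0 1) (ht : |t| ≤ 1)
    (ht' : t < 1) : 0 < 1 - 2 * r * t + r ^ 2 := by
  linarith [two_sub_two_mul_le hr ht]

theorem log_one_sub_two_mul_add_sq_le (hr : |r| < 1) (ht : |t| ≤ 1) :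
    Real.log (1 - 2 * r * t + r ^ 2) ≤ Real.log 4 :=
  Real.log_le_log (one_sub_two_mul_add_sq_pos hr ht) (one_sub_two_mul_add_sq_le_four hr.le ht)

theorem log_two_sub_two_mul_sub_le (hr : r ∈ Set.Icc 0 1) (ht : |t| ≤ 1) (ht' : t < 1) :
    Real.log (2 - 2 * t) - Real.log 4 ≤ Real.log (1 - 2 * r * t + r ^ 2) := by
  rw [sub_le_iff_le_add', ← Real.log_mul four_ne_zero
    (one_sub_two_mul_add_sq_pos_of_lt_one hr ht ht').ne']
  exact Real.log_le_log (by linarith) (two_sub_two_mul_le hr ht)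

open Filter Topology in
theorem tendsto_log_one_sub_two_mul_add_sq (ht : t < 1) :
    Tendsto (fun r : ℝ ↦ Real.log (1 - 2 * r * t + r ^ 2)) (𝓝 1) (𝓝 (Real.log (2 - 2 * t))) := by
  have hcont : Continuous fun r : ℝ ↦ 1 - 2 * r * t + r ^ 2 := by fun_prop
  convert (hcont.tendsto 1).log (by linarith) using 3
  ring

theorem re_mul_exp_arccos_pow (r : ℝ) (ht : |t| ≤ 1) (n : ℕ) :
    ((r * Complex.exp (Real.arccos t * Complex.I)) ^ n).re = r ^ n * (T ℝ n).eval t := by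
  obtain ⟨h₁, h₂⟩ := abs_le.1 ht
  rw [mul_pow, ← Complex.exp_nat_mul, ← mul_assoc, ← Complex.ofReal_natCast, ← Complex.ofReal_mul,
    ← Complex.ofReal_pow, Complex.re_ofReal_mul, Complex.exp_ofReal_mul_I_re]
  nth_rw 2 [← Real.cos_arccos h₁ h₂]
  rw [T_real_cos, Int.cast_natCast]

theorem norm_mul_exp_arccos (r t : ℝ) :
    ‖(r : ℂ) * Complex.exp (Real.arccos t * Complex.I)‖ = |r| := by
  rw [norm_mul, Complex.norm_exp_ofReal_mul_I, mul_one, Complex.norm_real, Real.norm_eq_abs]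

theorem normSq_one_sub_mul_exp_arccos (r : ℝ) (ht : |t| ≤ 1) :
    Complex.normSq (1 - r * Complex.exp (Real.arccos t * Complex.I)) =
      1 - 2 * r * t + r ^ 2 := by
  have hre := re_mul_exp_arccos_pow r ht 1
  rw [pow_one, pow_one, Nat.cast_one, T_one, eval_X] at hre
  rw [Complex.normSq_sub, Complex.normSq_one, Complex.normSq_eq_norm_sq, norm_mul_exp_arccos,
    sq_abs, one_mul, Complex.conj_re, hre]
  ring

theorem hasSum_chebyshevT_log (hr : |r| < 1) (ht : |t| ≤ 1) :
    HasSum (fun n : ℕ ↦ -2 * r ^ n / n * (T ℝ n).eval t) (Real.log (1 - 2 * r * t + r ^ 2)) := by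
  set z : ℂ := r * Complex.exp (Real.arccos t * Complex.I) with hz
  have hnorm : ‖z‖ < 1 := (norm_mul_exp_arccos r t).trans_lt hr
  have hlog : Real.log (1 - 2 * r * t + r ^ 2) = -2 * (-Complex.log (1 - z)).re := by
    rw [← normSq_one_sub_mul_exp_arccos r ht, ← hz, Complex.normSq_eq_norm_sq, Real.log_pow,
      Complex.neg_re, Complex.log_re]
    push_cast
    ring
  rw [hlog]
  refine ((Complex.hasSum_re (Complex.hasSum_taylorSeries_neg_log hnorm)).mul_left (-2)).congr_fun
    fun n ↦ ?_
  rw [← Complex.ofReal_natCast, Complex.div_ofReal_re, re_mul_exp_arccos_pow r ht]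
  ring

theorem hasSum_chebyshevT_poisson (hr : |r| < 1) (ht : |t| ≤ 1) :
    HasSum (fun n : ℕ ↦ r ^ n * (T ℝ n).eval t) ((1 - r * t) / (1 - 2 * r * t + r ^ 2)) := by
  set z : ℂ := r * Complex.exp (Real.arccos t * Complex.I) with hz
  have hnorm : ‖z‖ < 1 := (norm_mul_exp_arccos r t).trans_lt hr
  have hre : z.re = r * t := by
    simpa [hz] using re_mul_exp_arccos_pow r ht 1
  have hinv : ((1 - z)⁻¹).re = (1 - r * t) / (1 - 2 * r * t + r ^ 2) := by
    rw [Complex.inv_re, hz, normSq_one_sub_mul_exp_arccos r ht, ← hz, Complex.sub_re,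
      Complex.one_re, hre]
  rw [← hinv]
  simpa only [z, re_mul_exp_arccos_pow r ht] using
    Complex.hasSum_re (hasSum_geometric_of_norm_lt_one hnorm)

end ChebyshevExpansion

local notation "𝕊" => Metric.sphere (0 : ℍ) 1

attribute [local fun_prop] Quaternion.continuous_re

section HaarMeasure

instance : IsProbabilityMeasure muH := ⟨Measure.haarMeasure_self⟩

instance : muH.IsHaarMeasure := by unfold muH; infer_instance

instance : NullSingletonClass muH := by
  have hrank : 1 < Module.rank ℝ ℍ := by simp only [Quaternion.rank_eq_four, Nat.one_lt_ofNat]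
  have : ConnectedSpace 𝕊 :=
    isConnected_iff_connectedSpace.1 (isConnected_sphere hrank 0 zero_le_one)
  have : Nontrivial 𝕊 := ⟨1, -1, ne_neg_of_mem_unit_sphere ℝ 1⟩
  have := ConnectedSpace.neBot_nhdsWithin_compl_of_nontrivial_of_t1space (1 : 𝕊)
  infer_instance

theorem integrable_muH_of_continuous {f : 𝕊 → ℝ} (hf : Continuous f) : Integrable f muH :=
  hf.integrable_of_hasCompactSupport (.of_compactSpace _)

theorem re_sq_add_im_sq (x : 𝕊) : (x : ℍ).re ^ 2 + (x : ℍ).imI ^ 2 + (x : ℍ).imJ ^ 2 +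
    (x : ℍ).imK ^ 2 = 1 := by
  rw [← Quaternion.normSq_def', Quaternion.normSq_eq_norm_mul_self, norm_eq_of_mem_sphere, one_mul]

theorem abs_re_le_one (x : 𝕊) : |(x : ℍ).re| ≤ 1 := by
  rw [← sq_le_one_iff_abs_le_one]
  nlinarith [re_sq_add_im_sq x, sq_nonneg (x : ℍ).imI, sq_nonneg (x : ℍ).imJ,
    sq_nonneg (x : ℍ).imK]

theorem eq_one_of_re_eq_one {x : 𝕊} (hx : (x : ℍ).re = 1) : x = 1 := by
  have h : ‖(x : ℍ) - 1‖ ^ 2 = 0 := by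
    rw [norm_sub_sq_real, Quaternion.inner_def, star_one, mul_one, hx, norm_eq_of_mem_sphere,
      norm_one]
    norm_num
  exact Subtype.ext (sub_eq_zero.1 (norm_eq_zero.1 (pow_eq_zero_iff two_ne_zero |>.1 h)))

theorem ae_re_lt_one : ∀ᵐ x : 𝕊 ∂muH, (x : ℍ).re < 1 := by
  filter_upwards [muH.ae_ne 1] with x hx
  exact (le_of_abs_le (abs_re_le_one x)).lt_of_ne (mt eq_one_of_re_eq_one hx)

end HaarMeasure

section Moments

open Polynomial Polynomial.Chebyshev NormedSpace

theorem hasDerivAt_quaternion_re {u : ℝ → ℍ} {u' : ℍ} {θ : ℝ} (hu : HasDerivAt u u' θ) :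
    HasDerivAt (fun θ ↦ (u θ).re) u'.re θ := by
  have h := (innerSL ℝ (1 : ℍ)).hasFDerivAt.comp_hasDerivAt θ hu
  simp only [Function.comp_def, innerSL_apply_apply, Quaternion.inner_def, one_mul,
    Quaternion.re_star] at h
  exact h

/- The integrand is the derivative of `P (Re x) * Re (v * x)` along the flow `x ↦ exp (θ • v) * x`,
which preserves the Haar measure. -/
theorem integral_rotation_eq_zero {v : ℍ} (hv : v.re = 0) (P : ℝ[X]) :
    ∫ x : 𝕊, (P.derivative.eval (x : ℍ).re * (v * (x : ℍ)).re ^ 2 +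
      P.eval (x : ℍ).re * (v * (v * (x : ℍ))).re) ∂muH = 0 := by
  let γ (θ : ℝ) : 𝕊 := ⟨exp (θ • v), by simp [Quaternion.norm_exp, hv]⟩
  have hcont : Continuous fun x : 𝕊 ↦ P.derivative.eval (x : ℍ).re * (v * (x : ℍ)).re ^ 2 +
      P.eval (x : ℍ).re * (v * (v * (x : ℍ))).re := by fun_prop
  obtain ⟨C, hC⟩ := isCompact_univ.exists_bound_of_continuousOn hcont.continuousOn
  refine integral_eq_zero_of_hasDerivAt_mul_left (γ := γ)
    (f := fun x ↦ P.eval (x : ℍ).re * (v * (x : ℍ)).re)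
    (integrable_muH_of_continuous (by fun_prop)) hcont.aestronglyMeasurable
    (fun x ↦ hC x (Set.mem_univ x)) fun θ x ↦ ?_
  have hflow : HasDerivAt (fun θ ↦ (γ θ * x : 𝕊).1) (v * (γ θ * x : 𝕊)) θ := by
    simpa [γ, mul_assoc] using (hasDerivAt_exp_smul_const' v θ).mul_const (x : ℍ)
  have hP : HasDerivAt (fun θ ↦ P.eval (γ θ * x : 𝕊).1.re)
      (P.derivative.eval (γ θ * x : 𝕊).1.re * (v * (γ θ * x : 𝕊).1).re) θ :=
    (P.hasDerivAt _).comp θ (hasDerivAt_quaternion_re hflow)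
  exact (hP.mul (hasDerivAt_quaternion_re (hflow.const_mul v))).congr_deriv (by ring)

theorem integral_one_sub_sq_mul_derivative_sub (P : ℝ[X]) :
    ∫ x : 𝕊, ((1 - X ^ 2) * derivative P - 3 * X * P).eval (x : ℍ).re ∂muH = 0 := by
  let F (v : ℍ) (x : 𝕊) : ℝ := P.derivative.eval (x : ℍ).re * (v * (x : ℍ)).re ^ 2 +
    P.eval (x : ℍ).re * (v * (v * (x : ℍ))).re
  have hF (v : ℍ) : Integrable (F v) muH := integrable_muH_of_continuous (by fun_prop)
  let i : ℍ := ⟨0, 1, 0, 0⟩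
  let j : ℍ := ⟨0, 0, 1, 0⟩
  let k : ℍ := ⟨0, 0, 0, 1⟩
  have hsum (x : 𝕊) : ((1 - X ^ 2) * derivative P - 3 * X * P).eval (x : ℍ).re =
      F i x + F j x + F k x := by
    simp only [F, i, j, k, eval_sub, eval_mul, eval_one, eval_pow, eval_X, eval_ofNat, re_mul,
      imI_mul, imJ_mul, imK_mul]
    linear_combination (- P.derivative.eval (x : ℍ).re) * re_sq_add_im_sq x
  calc ∫ x : 𝕊, ((1 - X ^ 2) * derivative P - 3 * X * P).eval (x : ℍ).re ∂muH
      = ∫ x, F i x + F j x + F k x ∂muH := by simp only [hsum]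
    _ = ∫ x, F i x ∂muH + ∫ x, F j x ∂muH + ∫ x, F k x ∂muH := by
      rw [integral_add (f := fun x ↦ F i x + F j x) ((hF i).add (hF j)) (hF k),
        integral_add (hF i) (hF j)]
    _ = 0 := by simp only [F, integral_rotation_eq_zero (v := i) rfl,
        integral_rotation_eq_zero (v := j) rfl, integral_rotation_eq_zero (v := k) rfl, add_zero]

theorem integral_chebyshevU (n : ℕ) :
    ∫ x : 𝕊, (U ℝ n).eval (x : ℍ).re ∂muH = if n = 0 then 1 else 0 := by
  split_ifs with hn
  · simp [hn]
  have hode : (1 - X ^ 2) * derivative (derivative (U ℝ n)) - 3 * X * derivative (U ℝ n) =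
      C (-((n + 2) * n : ℝ)) * U ℝ n := by
    have h := one_sub_X_sq_mul_derivative_derivative_U_eq_poly_in_U (R := ℝ) n
    simp only [Function.iterate_succ, Function.iterate_zero, Function.comp_apply, id] at h
    simp only [map_neg, map_mul, map_add, map_natCast, map_ofNat, h, Int.cast_natCast]
    ring
  have h := integral_one_sub_sq_mul_derivative_sub (derivative (U ℝ n))
  simp only [hode, eval_mul, eval_C, integral_const_mul] at h
  have hn' : -((n + 2) * n : ℝ) ≠ 0 := by
    rw [neg_ne_zero]
    positivity
  exact (mul_eq_zero.1 h).resolve_left hn'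

theorem integral_chebyshevT (n : ℕ) :
    ∫ x : 𝕊, (T ℝ n).eval (x : ℍ).re ∂muH = if n = 0 then 1 else if n = 2 then -1 / 2 else 0 := by
  rcases n with _ | _ | n
  · simp
  · have h := integral_chebyshevU 1
    simp only [Nat.cast_one, U_one, eval_mul, eval_ofNat, eval_X, integral_const_mul] at h
    simpa using h
  · have hT (t : ℝ) : (T ℝ (n + 2 : ℕ)).eval t =
        ((U ℝ (n + 2 : ℕ)).eval t - (U ℝ n).eval t) / 2 := by
      have h := congrArg (eval t) (two_mul_T_eq_U_sub_U ℝ n)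
      simp only [eval_mul, eval_ofNat, eval_sub] at h
      push_cast
      linarith
    have hU (m : ℕ) : Integrable (fun x : 𝕊 ↦ (U ℝ m).eval (x : ℍ).re) muH :=
      integrable_muH_of_continuous (by fun_prop)
    simp only [hT, integral_div, integral_sub (hU _) (hU _), integral_chebyshevU]
    rcases eq_or_ne n 0 with rfl | hn <;> simp [*]

theorem integral_eq_of_hasSum_chebyshevT {a : ℕ → ℝ} {f : ℝ → ℝ}
    (hf : ∀ t, |t| ≤ 1 → HasSum (fun n : ℕ ↦ a n * (T ℝ n).eval t) (f t)) :
    ∫ x : 𝕊, f (x : ℍ).re ∂muH = a 0 - a 2 / 2 := by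
  have ha : Summable a := by simpa using (hf 1 (by simp)).summable
  have hint (n : ℕ) : Integrable (fun x : 𝕊 ↦ a n * (T ℝ n).eval (x : ℍ).re) muH :=
    integrable_muH_of_continuous (by fun_prop)
  have hbound (n : ℕ) : ∫ x : 𝕊, ‖a n * (T ℝ n).eval (x : ℍ).re‖ ∂muH ≤ |a n| := by
    calc _ ≤ ∫ _ : 𝕊, |a n| ∂muH := integral_mono (hint n).norm (integrable_const _) fun x ↦ by
          dsimp only
          rw [norm_mul]
          exact mul_le_of_le_one_right (norm_nonneg _) (abs_eval_T_real_le_one n (abs_re_le_one x))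
      _ = |a n| := by simp
  have h := hasSum_integral_of_summable_integral_norm hint
    (ha.abs.of_nonneg_of_le (fun n ↦ integral_nonneg fun x ↦ norm_nonneg _) hbound)
  simp only [(hf _ (abs_re_le_one _)).tsum_eq, integral_const_mul, integral_chebyshevT] at h
  have hsupp (n : ℕ) (hn : n ∉ ({0, 2} : Finset ℕ)) :
      a n * (if n = 0 then 1 else if n = 2 then -1 / 2 else 0) = 0 := by
    simp_all
  have hsum : ∑ n ∈ {0, 2}, a n * (if n = 0 then 1 else if n = 2 then -1 / 2 else 0) =
      a 0 - a 2 / 2 := by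
    rw [Finset.sum_pair (by norm_num)]
    simp only [if_true, if_neg two_ne_zero]
    ring
  exact h.unique (hsum ▸ hasSum_sum_of_ne_finset_zero hsupp)

end Moments

section RadialAverages

open Polynomial Polynomial.Chebyshev

variable {r : ℝ}

theorem integrable_log_one_sub_two_mul_re_add_sq_of_abs_lt_one (hr : |r| < 1) :
    Integrable (fun x : 𝕊 ↦ Real.log (1 - 2 * r * (x : ℍ).re + r ^ 2)) muH :=
  integrable_muH_of_continuous <| by
    fun_prop (disch := exact fun x ↦ (one_sub_two_mul_add_sq_pos hr (abs_re_le_one x)).ne')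

theorem integral_log_one_sub_two_mul_re_add_sq_of_abs_lt_one (hr : |r| < 1) :
    ∫ x : 𝕊, Real.log (1 - 2 * r * (x : ℍ).re + r ^ 2) ∂muH = r ^ 2 / 2 := by
  rw [integral_eq_of_hasSum_chebyshevT fun t ht ↦ hasSum_chebyshevT_log hr ht]
  simp only [pow_zero, Nat.cast_zero, div_zero, Nat.cast_ofNat]
  ring

theorem integral_inv_one_sub_two_mul_re_add_sq (hr : |r| < 1) :
    ∫ x : 𝕊, (1 - 2 * r * (x : ℍ).re + r ^ 2)⁻¹ ∂muH = 1 := by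
  have hpos (x : 𝕊) : 0 < 1 - 2 * r * (x : ℍ).re + r ^ 2 :=
    one_sub_two_mul_add_sq_pos hr (abs_re_le_one x)
  have hpoisson : ∫ x : 𝕊, (1 - r * (x : ℍ).re) / (1 - 2 * r * (x : ℍ).re + r ^ 2) ∂muH =
      1 - r ^ 2 / 2 := by
    rw [integral_eq_of_hasSum_chebyshevT fun t ht ↦ hasSum_chebyshevT_poisson hr ht, pow_zero]
  have hint : Integrable
      (fun x : 𝕊 ↦ (1 - r * (x : ℍ).re) / (1 - 2 * r * (x : ℍ).re + r ^ 2)) muH :=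
    integrable_muH_of_continuous <| by fun_prop (disch := exact fun x ↦ (hpos x).ne')
  have hsplit {t : ℝ} (ht : 1 - 2 * r * t + r ^ 2 ≠ 0) :
      (1 - r ^ 2) * (1 - 2 * r * t + r ^ 2)⁻¹ =
        2 * ((1 - r * t) / (1 - 2 * r * t + r ^ 2)) - 1 := by
    linear_combination -(mul_inv_cancel₀ ht)
  have hr' : 1 - r ^ 2 ≠ 0 := (sub_pos.2 ((sq_lt_one_iff_abs_lt_one r).2 hr)).ne'
  refine mul_left_cancel₀ hr' ?_
  rw [← integral_const_mul]
  simp only [hsplit (hpos _).ne']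
  rw [integral_sub (hint.const_mul 2) (integrable_const 1), integral_const_mul, hpoisson,
    integral_const, probReal_univ, one_smul]
  ring

open Filter Topology in
theorem integrable_and_integral_log_two_sub_two_mul_re :
    Integrable (fun x : 𝕊 ↦ Real.log (2 - 2 * (x : ℍ).re)) muH ∧
      ∫ x : 𝕊, Real.log (2 - 2 * (x : ℍ).re) ∂muH = 1 / 2 := by
  let ρ (n : ℕ) : ℝ := n / (n + 1)
  have hρ (n : ℕ) : ρ n ∈ Set.Icc 0 1 :=
    ⟨by positivity, div_le_one_of_le₀ (lt_add_one _).le (by positivity)⟩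
  have hρ_abs (n : ℕ) : |ρ n| < 1 := by
    rw [abs_of_nonneg (hρ n).1, div_lt_one (by positivity)]
    exact lt_add_one _
  have hρ_lim : Tendsto ρ atTop (𝓝 1) := tendsto_natCast_div_add_atTop 1
  have hint (n : ℕ) := integrable_log_one_sub_two_mul_re_add_sq_of_abs_lt_one (hρ_abs n)
  have hupper (n : ℕ) (x : 𝕊) : Real.log (1 - 2 * ρ n * (x : ℍ).re + ρ n ^ 2) ≤ Real.log 4 :=
    log_one_sub_two_mul_add_sq_le (hρ_abs n) (abs_re_le_one x)
  have hlower (n : ℕ) : ∀ᵐ x : 𝕊 ∂muH, Real.log (2 - 2 * (x : ℍ).re) - Real.log 4 ≤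
      Real.log (1 - 2 * ρ n * (x : ℍ).re + ρ n ^ 2) :=
    ae_re_lt_one.mono fun x ↦ log_two_sub_two_mul_sub_le (hρ n) (abs_re_le_one x)
  have hlim : ∀ᵐ x : 𝕊 ∂muH, Tendsto (fun n ↦ Real.log (1 - 2 * ρ n * (x : ℍ).re + ρ n ^ 2)) atTop
      (𝓝 (Real.log (2 - 2 * (x : ℍ).re))) :=
    ae_re_lt_one.mono fun x hx ↦ (tendsto_log_one_sub_two_mul_add_sq hx).comp hρ_lim
  have hint_lim : Tendsto (fun n ↦ ∫ x : 𝕊, Real.log (1 - 2 * ρ n * (x : ℍ).re + ρ n ^ 2) ∂muH)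
      atTop (𝓝 (1 / 2)) := by
    simp only [integral_log_one_sub_two_mul_re_add_sq_of_abs_lt_one (hρ_abs _)]
    simpa using (hρ_lim.pow 2).div_const 2
  have hconst : Integrable (fun _ : 𝕊 ↦ Real.log 4) muH := integrable_const _
  exact ⟨integrable_of_tendsto_of_le hint hconst hupper hlim hint_lim,
    integral_eq_of_tendsto_of_le hint hconst hupper hconst hlower hlim hint_lim⟩

theorem integrable_log_one_sub_two_mul_re_add_sq (hr : r ∈ Set.Icc 0 1) :
    Integrable (fun x : 𝕊 ↦ Real.log (1 - 2 * r * (x : ℍ).re + r ^ 2)) muH := by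
  rcases hr.2.eq_or_lt with rfl | hr₁
  · convert integrable_and_integral_log_two_sub_two_mul_re.1 using 3
    ring
  · exact integrable_log_one_sub_two_mul_re_add_sq_of_abs_lt_one
      (abs_lt.2 ⟨by linarith [hr.1], hr₁⟩)

theorem integral_log_one_sub_two_mul_re_add_sq (hr : r ∈ Set.Icc 0 1) :
    ∫ x : 𝕊, Real.log (1 - 2 * r * (x : ℍ).re + r ^ 2) ∂muH = r ^ 2 / 2 := by
  rcases hr.2.eq_or_lt with rfl | hr₁
  · convert integrable_and_integral_log_two_sub_two_mul_re.2 using 4 <;> ring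
  · exact integral_log_one_sub_two_mul_re_add_sq_of_abs_lt_one
      (abs_lt.2 ⟨by linarith [hr.1], hr₁⟩)

end RadialAverages

section LinearForms

open ProbabilityTheory

variable {p q : ℍ}

theorem exists_unit_quaternion_eq_smul (z : ℍ) : ∃ w : 𝕊, z = ‖z‖ • (w : ℍ) := by
  rcases eq_or_ne z 0 with rfl | hz
  · exact ⟨1, by simp⟩
  · exact ⟨⟨‖z‖⁻¹ • z, by simp [norm_smul, hz]⟩, by simp [hz]⟩

theorem norm_div_norm_mem_Icc (hqp : ‖q‖ ≤ ‖p‖) : ‖q‖ / ‖p‖ ∈ Set.Icc (0 : ℝ) 1 :=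
  ⟨by positivity, div_le_one_of_le₀ hqp (norm_nonneg p)⟩

theorem norm_add_mul_sq (p q : ℍ) (x : 𝕊) :
    ‖p + q * x‖ ^ 2 = ‖p‖ ^ 2 + 2 * (star p * q * x).re + ‖q‖ ^ 2 := by
  have hinner : inner ℝ p (q * (x : ℍ)) = (star p * q * x).re := by
    simp only [Quaternion.inner_def, star_mul, re_mul, re_star, imI_star, imJ_star, imK_star,
      imI_mul, imJ_mul, imK_mul]
    ring
  rw [norm_add_sq_real, norm_mul, norm_eq_of_mem_sphere, mul_one, hinner]

theorem identDistrib_norm_add_mul_sq (p q : ℍ) :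
    IdentDistrib (fun x : 𝕊 ↦ ‖p + q * x‖ ^ 2)
      (fun x : 𝕊 ↦ ‖p‖ ^ 2 + ‖q‖ ^ 2 - 2 * ‖p‖ * ‖q‖ * (x : ℍ).re) muH muH := by
  obtain ⟨w, hw⟩ := exists_unit_quaternion_eq_smul (-(star p * q))
  let F (x : 𝕊) : ℝ := ‖p‖ ^ 2 + ‖q‖ ^ 2 - 2 * ‖p‖ * ‖q‖ * (x : ℍ).re
  have hF : Measurable F := Continuous.measurable (by fun_prop)
  have hFw : (fun x : 𝕊 ↦ ‖p + q * x‖ ^ 2) = F ∘ (w * ·) := by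
    funext x
    have hre : (star p * q * x).re = -(‖p‖ * ‖q‖ * (w * x : 𝕊).1.re) := by
      rw [← neg_neg (star p * q), hw]
      simp
    rw [norm_add_mul_sq, hre, Function.comp_apply]
    ring
  have hw_id : IdentDistrib (w * ·) id muH muH :=
    ⟨(measurable_const_mul w).aemeasurable, aemeasurable_id,
      by rw [map_mul_left_eq_self, Measure.map_id]⟩
  rw [hFw]
  exact hw_id.comp hF

theorem identDistrib_norm_add_mul_swap (p q : ℍ) :
    IdentDistrib (fun x : 𝕊 ↦ ‖p + q * x‖) (fun x : 𝕊 ↦ ‖q + p * x‖) muH muH := by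
  have hqp := (identDistrib_norm_add_mul_sq q p).symm
  rw [add_comm (‖q‖ ^ 2), mul_right_comm 2 ‖q‖] at hqp
  simpa [Function.comp_def] using
    ((identDistrib_norm_add_mul_sq p q).trans hqp).comp Real.continuous_sqrt.measurable

theorem identDistrib_norm_add_mul_sq_of_ne_zero (hp : p ≠ 0) (q : ℍ) :
    IdentDistrib (fun x : 𝕊 ↦ ‖p + q * x‖ ^ 2)
      (fun x : 𝕊 ↦ ‖p‖ ^ 2 * (1 - 2 * (‖q‖ / ‖p‖) * (x : ℍ).re + (‖q‖ / ‖p‖) ^ 2)) muH muH := by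
  convert identDistrib_norm_add_mul_sq p q using 2 with x
  field_simp [norm_ne_zero_iff.2 hp]
  ring

theorem identDistrib_log_norm_add_mul (hp : p ≠ 0) (hqp : ‖q‖ ≤ ‖p‖) :
    IdentDistrib (fun x : 𝕊 ↦ Real.log ‖p + q * x‖) (fun x : 𝕊 ↦ Real.log ‖p‖ +
      Real.log (1 - 2 * (‖q‖ / ‖p‖) * (x : ℍ).re + (‖q‖ / ‖p‖) ^ 2) / 2) muH muH := by
  have h := (identDistrib_norm_add_mul_sq_of_ne_zero hp q).comp
    (Real.measurable_log.div_const 2)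
  have hr := norm_div_norm_mem_Icc hqp
  simp only [Function.comp_def, Real.log_pow] at h
  convert h.trans (.of_ae_eq h.aemeasurable_snd ?_) using 2
  · simp
  filter_upwards [ae_re_lt_one] with x hx
  rw [Real.log_mul (by simpa using hp) (one_sub_two_mul_add_sq_pos_of_lt_one hr (abs_re_le_one x)
    hx).ne', Real.log_pow]
  push_cast
  ring

theorem integrable_log_norm_add_mul (p q : ℍ) :
    Integrable (fun x : 𝕊 ↦ Real.log ‖p + q * x‖) muH := by
  wlog hqp : ‖q‖ ≤ ‖p‖ generalizing p q
  · exact ((identDistrib_norm_add_mul_swap p q).comp Real.measurable_log).integrable_iff.2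
      (this q p (le_of_not_ge hqp))
  rcases eq_or_ne p 0 with rfl | hp
  · simp_all
  exact (identDistrib_log_norm_add_mul hp hqp).integrable_iff.2 ((integrable_const _).add
    ((integrable_log_one_sub_two_mul_re_add_sq (norm_div_norm_mem_Icc hqp)).div_const 2))

theorem integral_log_norm_add_mul (hqp : ‖q‖ ≤ ‖p‖) :
    ∫ x : 𝕊, Real.log ‖p + q * x‖ ∂muH = Real.log ‖p‖ + ‖q‖ ^ 2 / 4 * (‖p‖ ^ 2)⁻¹ := by
  rcases eq_or_ne p 0 with rfl | hp
  · simp_all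
  have hr := norm_div_norm_mem_Icc hqp
  rw [(identDistrib_log_norm_add_mul hp hqp).integral_eq, integral_add (integrable_const _)
    ((integrable_log_one_sub_two_mul_re_add_sq hr).div_const 2), integral_div,
    integral_log_one_sub_two_mul_re_add_sq hr, integral_const, probReal_univ, one_smul]
  ring

theorem integral_inv_norm_add_mul_sq (hpq : ‖p‖ ≠ ‖q‖) :
    ∫ x : 𝕊, (‖p + q * x‖ ^ 2)⁻¹ ∂muH = (max ‖p‖ ‖q‖ ^ 2)⁻¹ := by
  wlog hqp : ‖q‖ ≤ ‖p‖ generalizing p q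
  · rw [max_comm, ← this hpq.symm (le_of_not_ge hqp)]
    exact ((identDistrib_norm_add_mul_swap p q).comp (measurable_id.pow_const 2).inv).integral_eq
  have hlt : ‖q‖ < ‖p‖ := hqp.lt_of_ne hpq.symm
  have hp : p ≠ 0 := norm_pos_iff.1 ((norm_nonneg q).trans_lt hlt)
  have hr : |‖q‖ / ‖p‖| < 1 := by
    rwa [abs_of_nonneg (by positivity), div_lt_one (norm_pos_iff.2 hp)]
  have h := ((identDistrib_norm_add_mul_sq_of_ne_zero hp q).comp measurable_inv).integral_eq
  simp only [Function.comp_apply, mul_inv, integral_const_mul,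
    integral_inv_one_sub_two_mul_re_add_sq hr, mul_one] at h
  rw [h, max_eq_left hqp]

theorem integrable_inv_norm_add_mul_sq (hpq : ‖p‖ ≠ ‖q‖) :
    Integrable (fun x : 𝕊 ↦ (‖p + q * x‖ ^ 2)⁻¹) muH := by
  refine .of_integral_ne_zero ?_
  rw [integral_inv_norm_add_mul_sq hpq]
  have : 0 < max ‖p‖ ‖q‖ := by
    rcases hpq.lt_or_gt with h | h
    · exact lt_max_of_lt_right ((norm_nonneg p).trans_lt h)
    · exact lt_max_of_lt_left ((norm_nonneg q).trans_lt h)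
  positivity

theorem integrable_const_mul_inv_norm_add_mul_sq {k : ℝ} (hk : ‖p‖ = ‖q‖ → k = 0) :
    Integrable (fun x : 𝕊 ↦ k * (‖p + q * x‖ ^ 2)⁻¹) muH := by
  by_cases hpq : ‖p‖ = ‖q‖
  · simp [hk hpq]
  · exact (integrable_inv_norm_add_mul_sq hpq).const_mul k

theorem integral_const_mul_inv_norm_add_mul_sq {k : ℝ} (hk : ‖p‖ = ‖q‖ → k = 0) :
    ∫ x : 𝕊, k * (‖p + q * x‖ ^ 2)⁻¹ ∂muH = k * (max ‖p‖ ‖q‖ ^ 2)⁻¹ := by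
  by_cases hpq : ‖p‖ = ‖q‖
  · simp [hk hpq]
  · rw [integral_const_mul, integral_inv_norm_add_mul_sq hpq]

theorem mahlerH_linear {a b : ℍ} (hab : a ≠ 0 ∨ b ≠ 0) :
    mahlerH (fun x ↦ a * x + b) = Real.log (max ‖a‖ ‖b‖) +
      (‖a‖ ^ 2 + ‖b‖ ^ 2) / (4 * max ‖a‖ ‖b‖ ^ 2) - 1 / 4 := by
  simp only [← norm_pos_iff] at hab
  simp only [mahlerH, add_comm _ b]
  rcases le_total ‖a‖ ‖b‖ with h | h
  · have hb : 0 < ‖b‖ := hab.elim (·.trans_le h) id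
    rw [integral_log_norm_add_mul h, max_eq_right h]
    field_simp
    ring
  · have ha : 0 < ‖a‖ := hab.elim id (·.trans_le h)
    have hswap := ((identDistrib_norm_add_mul_swap b a).comp Real.measurable_log).integral_eq
    simp only [Function.comp_def] at hswap
    rw [hswap, integral_log_norm_add_mul h, max_eq_left h]
    field_simp
    ring

theorem mahlerH2_swap (f : ℍ → ℍ → ℍ) : mahlerH2 (fun x y ↦ f y x) = mahlerH2 f :=
  integral_prod_swap fun p : 𝕊 × 𝕊 ↦ Real.log ‖f p.1 p.2‖

theorem norm_le_norm_add_mul_of_le_abs_sub {b : ℍ} (hb : ‖b‖ ≤ |‖p‖ - ‖q‖|) (x : 𝕊) :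
    ‖b‖ ≤ ‖p + q * x‖ := by
  calc ‖b‖ ≤ |‖p‖ - ‖-(q * (x : ℍ))‖| := by
        rwa [norm_neg, norm_mul, norm_eq_of_mem_sphere, mul_one]
    _ ≤ ‖p + q * x‖ := by simpa using abs_norm_sub_norm_le p (-(q * (x : ℍ)))

section TwoVariables

variable {a b c : ℍ}

theorem integral_log_norm_linear_right (hb : ‖b‖ ≤ |‖c‖ - ‖a‖|) (x : 𝕊) :
    ∫ y : 𝕊, Real.log ‖a * x + b * y + c‖ ∂muH =
      Real.log ‖c + a * x‖ + ‖b‖ ^ 2 / 4 * (‖c + a * x‖ ^ 2)⁻¹ := by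
  have hcomm (y : 𝕊) : a * x + b * y + c = c + a * x + b * y := by abel
  simp only [hcomm, integral_log_norm_add_mul (norm_le_norm_add_mul_of_le_abs_sub hb x)]

theorem norm_sq_div_four_eq_zero (hb : ‖b‖ ≤ |‖c‖ - ‖a‖|) (hca : ‖c‖ = ‖a‖) : ‖b‖ ^ 2 / 4 = 0 := by
  simp_all

theorem integrable_log_norm_linear (hb : ‖b‖ ≤ |‖c‖ - ‖a‖|) :
    Integrable (fun p : 𝕊 × 𝕊 ↦ Real.log ‖a * p.1 + b * p.2 + c‖) (muH.prod muH) := by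
  refine integrable_prod_of_le (Continuous.measurable (by fun_prop)).norm.log.aestronglyMeasurable
    (integrable_const (‖a‖ + ‖b‖ + ‖c‖)) (fun p ↦ ?_) (.of_forall fun x ↦ ?_) ?_
  · calc Real.log ‖a * p.1 + b * p.2 + c‖ ≤ ‖a * p.1 + b * p.2 + c‖ :=
          Real.log_le_self (norm_nonneg _)
      _ ≤ ‖a * (p.1 : ℍ)‖ + ‖b * (p.2 : ℍ)‖ + ‖c‖ := norm_add₃_le
      _ = ‖a‖ + ‖b‖ + ‖c‖ := by simp only [norm_mul, norm_eq_of_mem_sphere, mul_one]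
  · simpa only [add_right_comm _ _ c, add_comm c] using integrable_log_norm_add_mul (c + a * x) b
  · simp only [integral_log_norm_linear_right hb]
    exact (integrable_log_norm_add_mul c a).add
      (integrable_const_mul_inv_norm_add_mul_sq (norm_sq_div_four_eq_zero hb))

theorem mahlerH2_linear_of_norm_le (hac : a ≠ 0 ∨ c ≠ 0) (hb : ‖b‖ ≤ |‖c‖ - ‖a‖|) :
    mahlerH2 (fun x y ↦ a * x + b * y + c) = Real.log (max ‖a‖ ‖c‖) +
      (‖a‖ ^ 2 + ‖b‖ ^ 2 + ‖c‖ ^ 2) / (4 * max ‖a‖ ‖c‖ ^ 2) - 1 / 4 := by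
  have hk := norm_sq_div_four_eq_zero hb
  calc mahlerH2 (fun x y ↦ a * x + b * y + c)
      = ∫ x : 𝕊, (Real.log ‖c + a * x‖ + ‖b‖ ^ 2 / 4 * (‖c + a * x‖ ^ 2)⁻¹) ∂muH := by
        rw [mahlerH2, integral_prod _ (integrable_log_norm_linear hb)]
        simp only [integral_log_norm_linear_right hb]
    _ = mahlerH (fun x ↦ a * x + c) + ‖b‖ ^ 2 / 4 * (max ‖c‖ ‖a‖ ^ 2)⁻¹ := by
        simp only [integral_add (integrable_log_norm_add_mul c a)
          (integrable_const_mul_inv_norm_add_mul_sq hk),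
          integral_const_mul_inv_norm_add_mul_sq hk, mahlerH, add_comm _ c]
    _ = _ := by
        rw [mahlerH_linear hac, max_comm ‖c‖]
        ring

end TwoVariables

end LinearForms

/-- Maillot-type formula for `m_ℍ(ax + by + c)` in the non-triangle case. -/
theorem mahlerH2_linear_no_triangle (a b c : Quaternion ℝ)
    (h0 : ¬(a = 0 ∧ b = 0 ∧ c = 0))
    (htri : ‖b‖ + ‖c‖ ≤ ‖a‖ ∨ ‖a‖ + ‖c‖ ≤ ‖b‖ ∨ ‖a‖ + ‖b‖ ≤ ‖c‖)
    (M : ℝ) (hM : M = max (max ‖a‖ ‖b‖) ‖c‖) :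
    mahlerH2 (fun x y => a * x + b * y + c) =
      Real.log M + (‖a‖ ^ 2 + ‖b‖ ^ 2 + ‖c‖ ^ 2) / (4 * M ^ 2) - 1 / 4 := by
  have hab : ‖b‖ ≤ |‖c‖ - ‖a‖| ∨ ‖a‖ ≤ |‖c‖ - ‖b‖| := by
    rcases htri with h | h | h
    · exact .inl (by linarith [neg_le_abs (‖c‖ - ‖a‖)])
    · exact .inr (by linarith [neg_le_abs (‖c‖ - ‖b‖)])
    · exact .inl (by linarith [le_abs_self (‖c‖ - ‖a‖)])
  clear htri
  wlog hb : ‖b‖ ≤ |‖c‖ - ‖a‖| generalizing a b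
  · have hswap := this b a (by tauto) (max_comm ‖a‖ ‖b‖ ▸ hM) hab.symm (hab.resolve_left hb)
    rw [add_comm (‖a‖ ^ 2), ← hswap, ← mahlerH2_swap]
    simp only [add_comm (a * _)]
  have hac : a ≠ 0 ∨ c ≠ 0 := by
    by_contra! hac
    exact h0 ⟨hac.1, by simpa [hac.1, hac.2] using hb, hac.2⟩
  have hbM : ‖b‖ ≤ max ‖a‖ ‖c‖ := by
    refine hb.trans (abs_sub_le_iff.2 ⟨?_, ?_⟩)
    · linarith [le_max_right ‖a‖ ‖c‖, norm_nonneg a]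
    · linarith [le_max_left ‖a‖ ‖c‖, norm_nonneg c]
  rw [mahlerH2_linear_of_norm_le hac hb, hM, max_right_comm, max_eq_left hbM]
end
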